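/- Asymptotic tail comparison from maximal-rearrangement domination (Proposition on limsup): Let ξ and η be nonnegative integrable random variables such that ξ**(t) ≤ K·η**(t) for all t ∈ (0,1], for some constant K > 0. Let W : [0,∞) → [0,∞) be an increasing function for which there exist constants p > 1 and c > 0 with W(s·t) ≤ c·s^p·W(t) for all 0 < s < 1 and all t > 0. Then there is a constant C, depending only on p, c and K, such that limsup_{t→∞} W(t)·P(ξ ≥ t) ≤ limsup_{t→∞} W(t)·P(η ≥ C·t). -/

import Mathlib

/-!
If `a = P(|ξ| ≥ t) > 0`, then `ξ**(a) ≥ t`, because `ξ* ≥ t` on `(0, a)`. On the other hand, by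
the layer-cake formula, a tail bound `P(|η| > v) ≤ D v ^ (-p)` for `v > s` gives
`η**(a) ≤ s + D s ^ (1 - p) / ((p - 1) a)`. At `s = t / (2K)` the domination `ξ**(a) ≤ K η**(a)`
lets one absorb the term `K s = t / 2`, leaving `a ≤ D s ^ (-p) / (p - 1)`. A bound
`W(τ) P(|η| ≥ Cτ) ≤ l` for `τ ≥ t` provides such a tail bound through the growth condition on `W`,
with `D = c l (C t) ^ p / W(t)`, and for small `C` the resulting estimate is at most `l / W(t)`.
-/

open MeasureTheory ENNReal Filter

/-- The decreasing rearrangement `ξ*(t) = inf { s ≥ 0 : P(|ξ| > s) ≤ t }`. -/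
noncomputable def decRearr {Ω : Type*} [MeasureSpace Ω] (ξ : Ω → ℝ) (t : ℝ) : ℝ :=
  sInf {s : ℝ | 0 ≤ s ∧ volume {ω | s < |ξ ω|} ≤ ENNReal.ofReal t}

/-- The maximal function `ξ**(t) = (1/t)·∫₀^t ξ*(u) du`. -/
noncomputable def maxRearr {Ω : Type*} [MeasureSpace Ω] (ξ : Ω → ℝ) (t : ℝ) : ℝ :=
  (1 / t) * ∫ u in (0 : ℝ)..t, decRearr ξ u

open Set Topology

theorem exists_mem_Ioo_mul_rpow_le {p ε : ℝ} (hp : 0 < p) (hε : 0 < ε) (c : ℝ) :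
    ∃ x ∈ Ioo (0 : ℝ) 1, c * x ^ p ≤ ε := by
  have hlim : Tendsto (fun x : ℝ => c * x ^ p) (𝓝 0) (𝓝 0) := by
    simpa [Real.zero_rpow hp.ne'] using
      ((Real.continuousAt_rpow_const 0 p (Or.inr hp.le)).const_mul c).tendsto
  have hev : ∀ᶠ x in 𝓝[>] (0 : ℝ), c * x ^ p < ε :=
    (hlim.mono_left nhdsWithin_le_nhds).eventually_lt_const hε
  obtain ⟨x, hxε, hx⟩ := (hev.and (Ioo_mem_nhdsGT one_pos)).exists
  exact ⟨x, hx, hxε.le⟩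

theorem tendsto_measure_norm_ge_atTop {α E : Type*} {m : MeasurableSpace α} {μ : Measure α}
    [NormedAddCommGroup E] {f : α → E} (hf : Integrable f μ) :
    Tendsto (fun s : ℝ => μ {x | s ≤ ‖f x‖}) atTop (𝓝 0) := by
  have hlim : Tendsto (fun s : ℝ => (∫⁻ x, ‖f x‖ₑ ∂μ) / ENNReal.ofReal s) atTop (𝓝 0) := by
    simpa using ENNReal.Tendsto.div tendsto_const_nhds (Or.inr ENNReal.top_ne_zero)
      ENNReal.tendsto_ofReal_atTop (Or.inr hf.hasFiniteIntegral.ne)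
  refine tendsto_of_tendsto_of_tendsto_of_le_of_le' tendsto_const_nhds hlim
    (Eventually.of_forall fun _ => zero_le) ?_
  filter_upwards [eventually_gt_atTop 0] with s hs
  have hsub : {x | s ≤ ‖f x‖} ⊆ {x | ENNReal.ofReal s ≤ ‖f x‖ₑ} := fun x hx => by
    simpa only [mem_ofPred_eq, ofReal_norm] using ENNReal.ofReal_le_ofReal hx
  exact (measure_mono hsub).trans
    (meas_ge_le_lintegral_div hf.1.enorm (by simpa using hs) ENNReal.ofReal_ne_top)

theorem lintegral_Ioi_le_of_le_rpow {F : ℝ → ℝ≥0∞} {s p D : ℝ} (hs : 0 < s) (hp : 1 < p)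
    (hD : 0 ≤ D) (hF : ∀ v, s < v → F v ≤ ENNReal.ofReal (D * v ^ (-p))) :
    ∫⁻ v in Ioi s, F v ≤ ENNReal.ofReal (D * (s ^ (1 - p) / (p - 1))) := by
  have hval : ∫ v in Ioi s, D * v ^ (-p) = D * (s ^ (1 - p) / (p - 1)) := by
    rw [integral_const_mul, integral_Ioi_rpow_of_lt (by linarith) hs, neg_div, ← div_neg]
    ring_nf
  have hnonneg : ∀ v ∈ Ioi s, 0 ≤ D * v ^ (-p) := fun v hv =>
    mul_nonneg hD (Real.rpow_nonneg (hs.trans hv).le _)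
  rw [← hval, ofReal_integral_eq_lintegral_ofReal
    ((integrableOn_Ioi_rpow_of_lt (by linarith) hs).const_mul D)
    (ae_restrict_of_forall_mem measurableSet_Ioi hnonneg)]
  exact setLIntegral_mono' measurableSet_Ioi hF

section Rearrangement

variable {Ω : Type*} [MeasureSpace Ω] {ξ : Ω → ℝ} {a s t : ℝ}

theorem decRearr_nonneg (ξ : Ω → ℝ) (t : ℝ) : 0 ≤ decRearr ξ t :=
  Real.sInf_nonneg fun _ hs => hs.1

theorem decRearr_le (hs : 0 ≤ s) (h : volume {ω | s < |ξ ω|} ≤ ENNReal.ofReal t) :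
    decRearr ξ t ≤ s :=
  csInf_le ⟨0, fun _ hs => hs.1⟩ ⟨hs, h⟩

theorem exists_measure_lt_abs_le (hξ : Integrable ξ) (ht : 0 < t) :
    ∃ s, 0 ≤ s ∧ volume {ω | s < |ξ ω|} ≤ ENNReal.ofReal t := by
  have hsmall : ∀ᶠ s in atTop, volume {ω | s ≤ |ξ ω|} < ENNReal.ofReal t :=
    (tendsto_measure_norm_ge_atTop hξ).eventually_lt_const (ENNReal.ofReal_pos.mpr ht)
  obtain ⟨s, hs, hs0⟩ := (hsmall.and (eventually_ge_atTop 0)).exists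
  have hsub : {ω | s < |ξ ω|} ⊆ {ω | s ≤ |ξ ω|} := ofPred_subset_ofPred.mpr fun _ => le_of_lt
  exact ⟨s, hs0, (measure_mono hsub).trans hs.le⟩

theorem le_decRearr (hξ : Integrable ξ) (ht : 0 < t)
    (h : ENNReal.ofReal t < volume {ω | s ≤ |ξ ω|}) : s ≤ decRearr ξ t := by
  refine le_csInf (exists_measure_lt_abs_le hξ ht) fun r hr => ?_
  by_contra! hrs
  exact h.not_ge ((measure_mono fun _ hω => hrs.trans_le hω).trans hr.2)

theorem antitoneOn_decRearr (hξ : Integrable ξ) : AntitoneOn (decRearr ξ) (Ioi 0) :=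
  fun _ hx _ _ hxy => csInf_le_csInf ⟨0, fun _ hs => hs.1⟩ (exists_measure_lt_abs_le hξ hx)
    fun _ hs => ⟨hs.1, hs.2.trans (ENNReal.ofReal_le_ofReal hxy)⟩

theorem aemeasurable_decRearr (hξ : Integrable ξ) (a : ℝ) :
    AEMeasurable (decRearr ξ) (volume.restrict (Ioc 0 a)) :=
  aemeasurable_restrict_of_antitoneOn measurableSet_Ioc
    ((antitoneOn_decRearr hξ).mono fun _ hu => hu.1)

theorem volume_lt_decRearr_le (hs : 0 ≤ s) :
    volume (Ioi 0 ∩ {u | s < decRearr ξ u}) ≤ volume {ω | s < |ξ ω|} := by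
  rcases eq_or_ne (volume {ω | s < |ξ ω|}) ⊤ with htop | hfin
  · exact htop ▸ le_top
  have hsub : Ioi 0 ∩ {u | s < decRearr ξ u} ⊆ Ioc 0 (volume {ω | s < |ξ ω|}).toReal := by
    refine fun u hu => ⟨hu.1, ?_⟩
    by_contra! hlt
    exact hu.2.not_ge (decRearr_le hs (ENNReal.le_ofReal_iff_toReal_le hfin
      (le_of_lt hu.1) |>.mpr hlt.le))
  calc volume (Ioi 0 ∩ {u | s < decRearr ξ u})
      ≤ volume (Ioc 0 (volume {ω | s < |ξ ω|}).toReal) := measure_mono hsub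
    _ = volume {ω | s < |ξ ω|} := by
        rw [Real.volume_Ioc, sub_zero, ENNReal.ofReal_toReal hfin]

theorem lintegral_decRearr_le (hξ : Integrable ξ) (a : ℝ) :
    ∫⁻ u in Ioc 0 a, ENNReal.ofReal (decRearr ξ u) ≤
      ∫⁻ v in Ioi 0, min (ENNReal.ofReal a) (volume {ω | v < |ξ ω|}) := by
  rw [lintegral_eq_lintegral_meas_lt _ (ae_of_all _ (decRearr_nonneg ξ))
    (aemeasurable_decRearr hξ a)]
  refine setLIntegral_mono' measurableSet_Ioi fun v hv => le_min ?_ ?_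
  · simpa using measure_mono (μ := volume.restrict (Ioc 0 a)) (subset_univ {u | v < decRearr ξ u})
  · rw [Measure.restrict_apply' measurableSet_Ioc]
    have hsub : {u | v < decRearr ξ u} ∩ Ioc 0 a ⊆ Ioi 0 ∩ {u | v < decRearr ξ u} :=
      fun _ hu => ⟨hu.2.1, hu.1⟩
    exact (measure_mono hsub).trans (volume_lt_decRearr_le (le_of_lt hv))

theorem integrableOn_decRearr (hξ : Integrable ξ) (a : ℝ) :
    IntegrableOn (decRearr ξ) (Ioc 0 a) := by
  refine (lintegral_ofReal_ne_top_iff_integrable (aemeasurable_decRearr hξ a).aestronglyMeasurable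
    (ae_of_all _ (decRearr_nonneg ξ))).mp (ne_top_of_le_ne_top ?_
      ((lintegral_decRearr_le hξ a).trans (lintegral_mono fun _ => min_le_right _ _)))
  rw [← lintegral_eq_lintegral_meas_lt _ (ae_of_all _ fun _ => abs_nonneg _) hξ.abs.aemeasurable]
  exact (lintegral_ofReal_ne_top_iff_integrable hξ.abs.aestronglyMeasurable
    (ae_of_all _ fun _ => abs_nonneg _)).mpr hξ.abs

theorem le_maxRearr (hξ : Integrable ξ) (ha : 0 < a)
    (h : ENNReal.ofReal a ≤ volume {ω | t ≤ |ξ ω|}) : t ≤ maxRearr ξ a := by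
  have hint : ∫ _ in (0 : ℝ)..a, t ≤ ∫ u in (0 : ℝ)..a, decRearr ξ u :=
    intervalIntegral.integral_mono_on_of_le_Ioo ha.le intervalIntegrable_const
      ((intervalIntegrable_iff_integrableOn_Ioc_of_le ha.le).mpr (integrableOn_decRearr hξ a))
      fun u hu => le_decRearr hξ hu.1
        (((ENNReal.ofReal_lt_ofReal_iff ha).mpr hu.2).trans_le h)
  rw [intervalIntegral.integral_const, sub_zero, smul_eq_mul] at hint
  rwa [maxRearr, one_div, le_inv_mul_iff₀ ha]

end Rearrangement

section PowerTail

variable {Ω : Type*} [MeasureSpace Ω] {η : Ω → ℝ} {a s p D : ℝ}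

theorem integral_decRearr_le (hη : Integrable η) (ha : 0 ≤ a) (hs : 0 < s) (hp : 1 < p)
    (hD : 0 ≤ D)
    (htail : ∀ v, s < v → volume {ω | v < |η ω|} ≤ ENNReal.ofReal (D * v ^ (-p))) :
    ∫ u in (0 : ℝ)..a, decRearr η u ≤ a * s + D * (s ^ (1 - p) / (p - 1)) := by
  have hhead0 : 0 ≤ a * s := by positivity
  have htail0 : 0 ≤ D * (s ^ (1 - p) / (p - 1)) :=
    mul_nonneg hD (div_nonneg (Real.rpow_nonneg hs.le _) (by linarith))
  rw [intervalIntegral.integral_of_le ha,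
    integral_eq_lintegral_of_nonneg_ae (ae_of_all _ (decRearr_nonneg η))
      (aemeasurable_decRearr hη a).aestronglyMeasurable]
  refine ENNReal.toReal_le_of_le_ofReal (add_nonneg hhead0 htail0) ?_
  have hhead : ∫⁻ v in Ioc 0 s, min (ENNReal.ofReal a) (volume {ω | v < |η ω|}) ≤
      ENNReal.ofReal (a * s) := by
    refine (lintegral_mono fun _ => min_le_left _ _).trans_eq ?_
    rw [setLIntegral_const, Real.volume_Ioc, sub_zero, ENNReal.ofReal_mul ha]
  calc ∫⁻ u in Ioc 0 a, ENNReal.ofReal (decRearr η u)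
      ≤ ∫⁻ v in Ioc 0 s ∪ Ioi s, min (ENNReal.ofReal a) (volume {ω | v < |η ω|}) := by
        rw [Ioc_union_Ioi_eq_Ioi hs.le]
        exact lintegral_decRearr_le hη a
    _ ≤ (∫⁻ v in Ioc 0 s, min (ENNReal.ofReal a) (volume {ω | v < |η ω|})) +
          ∫⁻ v in Ioi s, min (ENNReal.ofReal a) (volume {ω | v < |η ω|}) :=
        lintegral_union_le _ _ _
    _ ≤ ENNReal.ofReal (a * s) + ENNReal.ofReal (D * (s ^ (1 - p) / (p - 1))) :=
        add_le_add hhead ((lintegral_mono fun _ => min_le_right _ _).trans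
          (lintegral_Ioi_le_of_le_rpow hs hp hD htail))
    _ = ENNReal.ofReal (a * s + D * (s ^ (1 - p) / (p - 1))) :=
        (ENNReal.ofReal_add hhead0 htail0).symm

theorem maxRearr_le (hη : Integrable η) (ha : 0 < a) (hs : 0 < s) (hp : 1 < p) (hD : 0 ≤ D)
    (htail : ∀ v, s < v → volume {ω | v < |η ω|} ≤ ENNReal.ofReal (D * v ^ (-p))) :
    maxRearr η a ≤ s + D * (s ^ (1 - p) / (p - 1)) / a := by
  rw [maxRearr, one_div, inv_mul_le_iff₀ ha, mul_add, mul_div_cancel₀ _ ha.ne']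
  exact integral_decRearr_le hη ha.le hs hp hD htail

end PowerTail

section Comparison

variable {Ω Ω' : Type*} [MeasureSpace Ω] [MeasureSpace Ω'] {ξ : Ω → ℝ} {η : Ω' → ℝ}
  {W : ℝ → ℝ} {p c x C D K l s t : ℝ}

theorem measure_abs_ge_le_of_maxRearr_le (hp : 1 < p) (hK : 0 < K) (hs : 0 < s) (hD : 0 ≤ D)
    (hξ : Integrable ξ) (hη : Integrable η)
    (hdom : 0 < volume.real {ω | 2 * K * s ≤ |ξ ω|} →
      maxRearr ξ (volume.real {ω | 2 * K * s ≤ |ξ ω|}) ≤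
        K * maxRearr η (volume.real {ω | 2 * K * s ≤ |ξ ω|}))
    (htail : ∀ v, s < v → volume {ω | v < |η ω|} ≤ ENNReal.ofReal (D * v ^ (-p))) :
    volume {ω | 2 * K * s ≤ |ξ ω|} ≤ ENNReal.ofReal (D * s ^ (-p) / (p - 1)) := by
  have hbound0 : 0 ≤ D * s ^ (-p) / (p - 1) :=
    div_nonneg (by positivity) (sub_pos.mpr hp).le
  have hfin : volume {ω | 2 * K * s ≤ |ξ ω|} ≠ ⊤ :=
    (hξ.measure_norm_ge_lt_top (by positivity)).ne
  rw [ENNReal.le_ofReal_iff_toReal_le hfin hbound0, ← measureReal_def]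
  set a := volume.real {ω | 2 * K * s ≤ |ξ ω|}
  have ha0 : 0 ≤ a := measureReal_nonneg
  rcases ha0.eq_or_lt with ha | ha
  · rwa [← ha]
  have habsorb : K * (s + s) ≤ K * (s + D * (s ^ (1 - p) / (p - 1)) / a) :=
    calc K * (s + s) = 2 * K * s := by ring
      _ ≤ maxRearr ξ a := le_maxRearr hξ ha (ofReal_measureReal hfin).le
      _ ≤ K * maxRearr η a := hdom ha
      _ ≤ K * (s + D * (s ^ (1 - p) / (p - 1)) / a) :=
        mul_le_mul_of_nonneg_left (maxRearr_le hη ha hs hp hD htail) hK.le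
  have hsa : s * a ≤ D * (s ^ (1 - p) / (p - 1)) :=
    (le_div_iff₀ ha).mp (le_of_add_le_add_left (le_of_mul_le_mul_left habsorb hK))
  refine le_of_mul_le_mul_left (hsa.trans_eq ?_) hs
  rw [sub_eq_add_neg 1 p, Real.rpow_one_add' hs.le (by linarith)]
  ring

theorem measure_abs_ge_le_of_growth (hc : 0 < c) (hC : 0 < C) (ht : 0 < t) (hl : 0 ≤ l)
    (hWt : 0 < W t)
    (hW : ∀ s t : ℝ, 0 < s → s < 1 → 0 < t → W (s * t) ≤ c * s ^ p * W t)
    (htail : ∀ τ, t ≤ τ → ENNReal.ofReal (W τ) * volume {ω | C * τ ≤ |η ω|} ≤ ENNReal.ofReal l)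
    {v : ℝ} (hv : C * t < v) :
    volume {ω | v ≤ |η ω|} ≤ ENNReal.ofReal (c * l * (C * t) ^ p / W t * v ^ (-p)) := by
  have hv0 : 0 < v := lt_trans (by positivity) hv
  have htv : t ≤ v / C := (le_div_iff₀' hC).mpr hv.le
  have hgrowth : W t ≤ c * (C * t / v) ^ p * W (v / C) := by
    have := hW (C * t / v) (v / C) (by positivity) ((div_lt_one hv0).mpr hv) (by positivity)
    rwa [show C * t / v * (v / C) = t by field_simp] at this
  have hWv : 0 < W (v / C) := pos_of_mul_pos_right (hWt.trans_le hgrowth) (by positivity)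
  have hvol : volume {ω | v ≤ |η ω|} ≤ ENNReal.ofReal (l / W (v / C)) := by
    have := htail (v / C) htv
    rw [mul_div_cancel₀ v hC.ne'] at this
    rwa [ENNReal.ofReal_div_of_pos hWv, ENNReal.le_div_iff_mul_le (by simp [hWv]) (by simp),
      mul_comm]
  refine hvol.trans (ENNReal.ofReal_le_ofReal ?_)
  rw [div_le_iff₀ hWv, Real.rpow_neg hv0.le]
  calc l = l / W t * W t := (div_mul_cancel₀ l hWt.ne').symm
    _ ≤ l / W t * (c * (C * t / v) ^ p * W (v / C)) := by gcongr
    _ = c * l * (C * t) ^ p / W t * (v ^ p)⁻¹ * W (v / C) := by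
      rw [Real.div_rpow (by positivity) hv0.le]
      ring

theorem ofReal_mul_measure_abs_ge_le (hp : 1 < p) (hc : 0 < c) (hK : 0 < K) (hx : x ∈ Ioo 0 1)
    (hxc : c * x ^ p ≤ p - 1) (ht : 0 < t) (hl : 0 ≤ l) (hξ : Integrable ξ) (hη : Integrable η)
    (hWt : 0 ≤ W t)
    (hW : ∀ s t : ℝ, 0 < s → s < 1 → 0 < t → W (s * t) ≤ c * s ^ p * W t)
    (hdom : 0 < volume.real {ω | t ≤ |ξ ω|} →
      maxRearr ξ (volume.real {ω | t ≤ |ξ ω|}) ≤ K * maxRearr η (volume.real {ω | t ≤ |ξ ω|}))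
    (htail : ∀ τ, t ≤ τ →
      ENNReal.ofReal (W τ) * volume {ω | x / (2 * K) * τ ≤ |η ω|} ≤ ENNReal.ofReal l) :
    ENNReal.ofReal (W t) * volume {ω | t ≤ |ξ ω|} ≤ ENNReal.ofReal l := by
  obtain ⟨hx0, hx1⟩ := hx
  rcases hWt.eq_or_lt with hWt | hWt
  · simp [← hWt]
  obtain ⟨s, rfl⟩ : ∃ s, t = 2 * K * s := ⟨t / (2 * K), by field_simp⟩
  have hs : 0 < s := pos_of_mul_pos_right ht (by positivity)
  have hCt : x / (2 * K) * (2 * K * s) = x * s := by field_simp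
  have hηtail : ∀ v, s < v → volume {ω | v < |η ω|} ≤
      ENNReal.ofReal (c * l * (x * s) ^ p / W (2 * K * s) * v ^ (-p)) := by
    intro v hv
    have hsub : {ω | v < |η ω|} ⊆ {ω | v ≤ |η ω|} := ofPred_subset_ofPred.mpr fun _ => le_of_lt
    have hxv : x / (2 * K) * (2 * K * s) < v := hCt ▸ (mul_lt_of_lt_one_left hs hx1).trans hv
    rw [← hCt]
    exact (measure_mono hsub).trans
      (measure_abs_ge_le_of_growth hc (by positivity) ht hl hWt hW htail hxv)
  have hξtail := measure_abs_ge_le_of_maxRearr_le hp hK hs (by positivity) hξ hη hdom hηtail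
  have hconst : c * l * (x * s) ^ p / W (2 * K * s) * s ^ (-p) / (p - 1) ≤ l / W (2 * K * s) :=
    calc c * l * (x * s) ^ p / W (2 * K * s) * s ^ (-p) / (p - 1)
        = l / W (2 * K * s) * (c * x ^ p / (p - 1)) := by
          rw [Real.mul_rpow hx0.le hs.le, Real.rpow_neg hs.le]
          field_simp
      _ ≤ l / W (2 * K * s) := mul_le_of_le_one_right (by positivity)
          (div_le_one_of_le₀ hxc (sub_pos.mpr hp).le)
  calc ENNReal.ofReal (W (2 * K * s)) * volume {ω | 2 * K * s ≤ |ξ ω|}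
      ≤ ENNReal.ofReal (W (2 * K * s)) * ENNReal.ofReal (l / W (2 * K * s)) := by
        gcongr
        exact hξtail.trans (ENNReal.ofReal_le_ofReal hconst)
    _ = ENNReal.ofReal l := by
        rw [← ENNReal.ofReal_mul hWt.le, mul_div_cancel₀ l hWt.ne']

theorem limsup_measure_abs_ge_le (hp : 1 < p) (hc : 0 < c) (hK : 0 < K) (hx : x ∈ Ioo 0 1)
    (hxc : c * x ^ p ≤ p - 1) (hξ : Integrable ξ) (hη : Integrable η)
    (hdom : ∀ᶠ t in 𝓝[>] 0, maxRearr ξ t ≤ K * maxRearr η t)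
    (hW0 : ∀ t : ℝ, 0 ≤ t → 0 ≤ W t)
    (hW : ∀ s t : ℝ, 0 < s → s < 1 → 0 < t → W (s * t) ≤ c * s ^ p * W t) :
    limsup (fun t => ENNReal.ofReal (W t) * volume {ω | t ≤ |ξ ω|}) atTop ≤
      limsup (fun t => ENNReal.ofReal (W t) * volume {ω | x / (2 * K) * t ≤ |η ω|}) atTop := by
  refine le_of_forall_gt_imp_ge_of_dense fun L hL => ?_
  rcases eq_or_ne L ⊤ with rfl | hLtop
  · exact le_top
  rw [← ENNReal.ofReal_toReal hLtop] at hL ⊢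
  have hsmall : Tendsto (fun t => volume.real {ω | t ≤ |ξ ω|}) atTop (𝓝 0) :=
    (ENNReal.tendsto_toReal ENNReal.zero_ne_top).comp (tendsto_measure_norm_ge_atTop hξ)
  refine limsup_le_of_le (by isBoundedDefault) ?_
  filter_upwards [eventually_gt_atTop 0, hsmall.eventually (eventually_nhdsWithin_iff.mp hdom),
    eventually_forall_ge_atTop.mpr (eventually_lt_of_limsup_lt hL)] with t ht hdomt htail
  exact ofReal_mul_measure_abs_ge_le hp hc hK hx hxc ht ENNReal.toReal_nonneg hξ hη
    (hW0 t ht.le) hW hdomt fun τ hτ => (htail τ hτ).le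

end Comparison

theorem limsup_tail_comparison_general (p c K : ℝ) (hp : 1 < p) (hc : 0 < c) (hK : 0 < K) :
    ∃ C : ℝ, 0 < C ∧
      ∀ (Ω Ω' : Type*) [MeasureSpace Ω] [MeasureSpace Ω'] (ξ : Ω → ℝ) (η : Ω' → ℝ),
        Integrable ξ → Integrable η →
        (∀ᶠ t in 𝓝[>] 0, maxRearr ξ t ≤ K * maxRearr η t) →
      ∀ W : ℝ → ℝ,
        (∀ t : ℝ, 0 ≤ t → 0 ≤ W t) →
        (∀ s t : ℝ, 0 < s → s < 1 → 0 < t → W (s * t) ≤ c * s ^ p * W t) →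
        limsup (fun t => ENNReal.ofReal (W t) * volume {ω | t ≤ |ξ ω|}) atTop ≤
          limsup (fun t => ENNReal.ofReal (W t) * volume {ω | C * t ≤ |η ω|}) atTop := by
  obtain ⟨x, hx, hxc⟩ := exists_mem_Ioo_mul_rpow_le (zero_lt_one.trans hp) (sub_pos.mpr hp) c
  exact ⟨x / (2 * K), div_pos hx.1 (by positivity), fun _ _ _ _ _ _ hξ hη hdom _ hW0 hW =>
    limsup_measure_abs_ge_le hp hc hK hx hxc hξ hη hdom hW0 hW⟩

/-- Asymptotic tail comparison from maximal-rearrangement domination: if `ξ** ≤ K·η**` and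
`W` is increasing with `W(st) ≤ c·s^p·W(t)` for `0 < s < 1`, then
`limsup_{t→∞} W(t)·P(ξ ≥ t) ≤ limsup_{t→∞} W(t)·P(η ≥ C·t)` for a constant `C` depending
only on `p`, `c` and `K`. -/
theorem limsup_tail_comparison (p c K : ℝ) (hp : 1 < p) (hc : 0 < c) (hK : 0 < K) :
    ∃ C : ℝ, 0 < C ∧
      ∀ (Ω : Type) [MeasureSpace Ω], IsProbabilityMeasure (volume : Measure Ω) →
      ∀ (ξ η : Ω → ℝ),
        (∀ ω, 0 ≤ ξ ω) → (∀ ω, 0 ≤ η ω) →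
        Integrable ξ volume → Integrable η volume →
        (∀ t ∈ Set.Ioc (0 : ℝ) 1, maxRearr ξ t ≤ K * maxRearr η t) →
      ∀ (W : ℝ → ℝ),
        MonotoneOn W (Set.Ici (0 : ℝ)) →
        (∀ x : ℝ, 0 ≤ x → 0 ≤ W x) →
        (∀ s t : ℝ, 0 < s → s < 1 → 0 < t → W (s * t) ≤ c * s ^ p * W t) →
        Filter.limsup (fun t : ℝ => ENNReal.ofReal (W t) * volume {ω | t ≤ ξ ω}) atTop ≤
          Filter.limsup (fun t : ℝ => ENNReal.ofReal (W t) * volume {ω | C * t ≤ η ω})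
            atTop := by
  obtain ⟨C, hC, hlimsup⟩ := limsup_tail_comparison_general p c K hp hc hK
  exact ⟨C, hC, fun Ω _ _ ξ η hξ0 hη0 hξ hη hdom W _ hW0 hW => by
    simpa only [abs_of_nonneg (hξ0 _), abs_of_nonneg (hη0 _)] using hlimsup Ω Ω ξ η hξ hη
      (eventually_of_mem (Ioc_mem_nhdsGT one_pos) hdom) W hW0 hW⟩
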